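/- arXiv:1001.4940 — 4 statements merged into one kernel-verified Lean document; each statement's English description precedes it below -/
import Mathlib

section
/- Let f, h : ℝ → ℝ be infinitely differentiable functions. Suppose that for all j, k ∈ ℕ the symmetry relation (d/dx)^j(h·f)(0) · (d/dx)^k f(0) = (d/dx)^k(h·f)(0) · (d/dx)^j f(0) holds (this is the statement that ∂_x^j ∂_y^k (h(x)f(x)f(y)) and ∂_x^k ∂_y^j (h(x)f(x)f(y)) agree at (x,y) = (0,0)). Then either the j-th derivative of f at 0 vanishes for every j ∈ ℕ (including j = 0), or the k-th derivative of h at 0 vanishes for every integer k ≥ 1. -/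
/-- If `f, h : ℝ → ℝ` are smooth and for all `j k : ℕ` the symmetry
relation `(h·f)⁽ʲ⁾(0) · f⁽ᵏ⁾(0) = (h·f)⁽ᵏ⁾(0) · f⁽ʲ⁾(0)` holds, then either all
derivatives of `f` at `0` vanish, or all derivatives of `h` of order `≥ 1` at `0` vanish. -/
theorem stmt_0 (f h : ℝ → ℝ) (hf : ContDiff ℝ (⊤ : ℕ∞) f) (hh : ContDiff ℝ (⊤ : ℕ∞) h)
    (hsym : ∀ j k : ℕ,
      iteratedDeriv j (fun x => h x * f x) 0 * iteratedDeriv k f 0 =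
        iteratedDeriv k (fun x => h x * f x) 0 * iteratedDeriv j f 0) :
    (∀ j : ℕ, iteratedDeriv j f 0 = 0) ∨ (∀ k : ℕ, 1 ≤ k → iteratedDeriv k h 0 = 0) := by
  classical
  by_cases hz : ∀ j : ℕ, iteratedDeriv j f 0 = 0
  · exact Or.inl hz
  right
  push Not at hz
  have hm := Nat.find_spec hz
  have hmin : ∀ i, i < Nat.find hz → iteratedDeriv i f 0 = 0 := fun i hi => by
    simpa using Nat.find_min hz hi
  generalize Nat.find hz = m at hm hmin
  have leib : ∀ n : ℕ, iteratedDeriv n (fun x => h x * f x) 0 =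
      ∑ i ∈ Finset.range (n + 1),
        (n.choose i : ℝ) * iteratedDeriv i h 0 * iteratedDeriv (n - i) f 0 := fun n =>
    iteratedDeriv_mul ((hh.of_le (by exact_mod_cast le_top)).contDiffAt)
      ((hf.of_le (by exact_mod_cast le_top)).contDiffAt)
  have h0 : iteratedDeriv m (fun x => h x * f x) 0 = h 0 * iteratedDeriv m f 0 := by
    rw [leib, Finset.sum_eq_single 0]
    · simp
    · intro b hb hb0
      rw [Finset.mem_range] at hb
      rw [hmin (m - b) (by omega), mul_zero]
    · simp
  have hall : ∀ j, iteratedDeriv j (fun x => h x * f x) 0 = h 0 * iteratedDeriv j f 0 := by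
    intro j
    have := hsym j m
    rw [h0] at this
    apply mul_right_cancel₀ hm
    rw [this]; ring
  intro k
  induction k using Nat.strong_induction_on with
  | _ k ih =>
    intro hk
    have e := hall (m + k)
    rw [leib, Finset.sum_eq_add_of_mem 0 k (by simp) (by simp) (by omega)] at e
    · simp only [Nat.choose_zero_right, Nat.cast_one, one_mul, iteratedDeriv_zero, Nat.sub_zero,
        Nat.add_sub_cancel, add_eq_left, mul_eq_zero, hm, or_false, Nat.cast_eq_zero] at e
      rcases e with e | e
      · exact absurd e (Nat.choose_pos (by omega)).ne'
      · exact e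
    · intro c hc hne
      rw [Finset.mem_range] at hc
      rcases lt_or_ge c k with hlt | hge
      · rw [ih c hlt (by omega)]; ring
      · rw [hmin (m + k - c) (by omega), mul_zero]
end

section
/- Let f, h : ℝ → ℝ be infinitely differentiable. Let j ∈ ℕ be the smallest natural number with (d/dx)^j f(0) ≠ 0 (in particular (d/dx)^m f(0) = 0 for all m < j), and let k ≥ 1 be the smallest positive integer with (d/dx)^k h(0) ≠ 0 (in particular (d/dx)^l h(0) = 0 for 1 ≤ l < k). Then (d/dx)^{j+k}(h·f)(0) · (d/dx)^j f(0) − (d/dx)^j(h·f)(0) · (d/dx)^{j+k} f(0) = C(j+k, k) · (d/dx)^k h(0) · ((d/dx)^j f(0))², where C(j+k, k) is the binomial coefficient; in particular this expression is nonzero. -/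
/-- Let `f, h : ℝ → ℝ` be smooth, `j` the smallest natural number with
`f⁽ʲ⁾(0) ≠ 0`, and `k ≥ 1` the smallest positive integer with `h⁽ᵏ⁾(0) ≠ 0`. Then
`(h·f)⁽ʲ⁺ᵏ⁾(0)·f⁽ʲ⁾(0) − (h·f)⁽ʲ⁾(0)·f⁽ʲ⁺ᵏ⁾(0) = C(j+k,k)·h⁽ᵏ⁾(0)·(f⁽ʲ⁾(0))²`,
and in particular this expression is nonzero. -/
theorem stmt_1 (f h : ℝ → ℝ) (hf : ContDiff ℝ (⊤ : ℕ∞) f) (hh : ContDiff ℝ (⊤ : ℕ∞) h)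
    (j k : ℕ) (hk1 : 1 ≤ k)
    (hj : iteratedDeriv j f 0 ≠ 0) (hjmin : ∀ m : ℕ, m < j → iteratedDeriv m f 0 = 0)
    (hkne : iteratedDeriv k h 0 ≠ 0)
    (hkmin : ∀ l : ℕ, 1 ≤ l → l < k → iteratedDeriv l h 0 = 0) :
    iteratedDeriv (j + k) (fun x => h x * f x) 0 * iteratedDeriv j f 0 -
        iteratedDeriv j (fun x => h x * f x) 0 * iteratedDeriv (j + k) f 0 =
      ((j + k).choose k : ℝ) * iteratedDeriv k h 0 * (iteratedDeriv j f 0) ^ 2 ∧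
    ((j + k).choose k : ℝ) * iteratedDeriv k h 0 * (iteratedDeriv j f 0) ^ 2 ≠ 0 := by
  have key : ∀ n : ℕ, iteratedDeriv n (fun x => h x * f x) 0 =
      ∑ i ∈ Finset.range (n + 1),
        (n.choose i : ℝ) * iteratedDeriv i h 0 * iteratedDeriv (n - i) f 0 := by
    intro n
    exact iteratedDeriv_fun_mul
      ((hh.of_le (by exact_mod_cast le_top)).contDiffAt)
      ((hf.of_le (by exact_mod_cast le_top)).contDiffAt)
  have e1 : iteratedDeriv j (fun x => h x * f x) 0 =
      iteratedDeriv 0 h 0 * iteratedDeriv j f 0 := by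
    rw [key, Finset.sum_eq_single 0]
    · simp
    · intro i hi hi0
      have := Finset.mem_range.mp hi
      rw [hjmin (j - i) (by omega), mul_zero]
    · simp
  have e2 : iteratedDeriv (j + k) (fun x => h x * f x) 0 =
      iteratedDeriv 0 h 0 * iteratedDeriv (j + k) f 0 +
        ((j + k).choose k : ℝ) * iteratedDeriv k h 0 * iteratedDeriv j f 0 := by
    rw [key, Finset.sum_eq_add (0 : ℕ) k (by omega)]
    · simp
    · intro i hi hne
      have := Finset.mem_range.mp hi
      rcases lt_or_ge i k with hik | hik
      · rw [hkmin i (by omega) hik, mul_zero, zero_mul]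
      · rw [hjmin (j + k - i) (by omega), mul_zero]
    · simp
    · intro hn
      exact absurd (Finset.mem_range.mpr (by omega)) hn
  refine ⟨by rw [e1, e2]; ring, ?_⟩
  have hc : ((j + k).choose k : ℝ) ≠ 0 := by
    exact_mod_cast (Nat.choose_pos (by omega)).ne'
  exact mul_ne_zero (mul_ne_zero hc hkne) (pow_ne_zero 2 hj)
end

section
/- Let f, h : ℝⁿ → ℝ be infinitely differentiable. Suppose that for all multi-indices α, β ∈ ℕⁿ the symmetry relation ∂^α(h·f)(0) · ∂^β f(0) = ∂^β(h·f)(0) · ∂^α f(0) holds (this is the statement that ∂_x^α ∂_y^β (h(x)f(x)f(y)) and ∂_x^β ∂_y^α (h(x)f(x)f(y)) agree at (x,y) = (0,0)). Then either ∂^α f(0) = 0 for every multi-index α ∈ ℕⁿ, or ∂^β h(0) = 0 for every nonzero multi-index β ∈ ℕⁿ. -/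
/-- The first-order partial derivative of `f : ℝⁿ → ℝ` in the `i`-th coordinate direction. -/
noncomputable def pderivOne {n : ℕ} (i : Fin n) (f : (Fin n → ℝ) → ℝ) : (Fin n → ℝ) → ℝ :=
  fun x => fderiv ℝ f x (Pi.single i 1)

/-- The iterated partial derivative `∂^α f` of `f : ℝⁿ → ℝ` for a multi-index `α ∈ ℕⁿ`:
the derivative in the `i`-th coordinate direction is applied `α i` times, for each `i`. -/
noncomputable def mderiv {n : ℕ} (α : Fin n → ℕ) (f : (Fin n → ℝ) → ℝ) : (Fin n → ℝ) → ℝ :=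
  (List.finRange n).foldr (fun i g => (pderivOne i)^[α i] g) f

theorem pd_smooth {n : ℕ} (i : Fin n) {f : (Fin n → ℝ) → ℝ} (hf : ContDiff ℝ (⊤ : ℕ∞) f) :
    ContDiff ℝ (⊤ : ℕ∞) (pderivOne i f) := by
  unfold pderivOne
  exact (hf.fderiv_right (by simp)).clm_apply contDiff_const

theorem pd_iter_smooth {n : ℕ} (i : Fin n) (k : ℕ) {f : (Fin n → ℝ) → ℝ}
    (hf : ContDiff ℝ (⊤ : ℕ∞) f) : ContDiff ℝ (⊤ : ℕ∞) ((pderivOne i)^[k] f) := by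
  induction k with
  | zero => simpa using hf
  | succ k ih => rw [Function.iterate_succ_apply']; exact pd_smooth i ih

theorem pd_comm {n : ℕ} (i j : Fin n) {f : (Fin n → ℝ) → ℝ} (hf : ContDiff ℝ (⊤ : ℕ∞) f) :
    pderivOne i (pderivOne j f) = pderivOne j (pderivOne i f) := by
  have key : ∀ (a b : Fin n) (x : Fin n → ℝ), pderivOne a (pderivOne b f) x
      = fderiv ℝ (fderiv ℝ f) x (Pi.single a 1) (Pi.single b 1) := by
    intro a b x
    have hd : DifferentiableAt ℝ (fderiv ℝ f) x :=
      ((hf.fderiv_right (m := (⊤ : ℕ∞)) (by simp)).differentiable (by simp)) x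
    unfold pderivOne
    rw [fderiv_clm_apply hd (differentiableAt_const _)]
    simp
  funext x
  rw [key, key]
  have hs : IsSymmSndFDerivAt ℝ f x := (hf.contDiffAt).isSymmSndFDerivAt (by
    simp only [minSmoothness_of_isRCLikeNormedField]
    exact WithTop.coe_le_coe.2 (le_top : (2 : ℕ∞) ≤ ⊤))
  exact hs.eq _ _

theorem pd_iter_comm {n : ℕ} (i j : Fin n) (k : ℕ) {f : (Fin n → ℝ) → ℝ}
    (hf : ContDiff ℝ (⊤ : ℕ∞) f) :
    pderivOne i ((pderivOne j)^[k] f) = (pderivOne j)^[k] (pderivOne i f) := by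
  induction k with
  | zero => rfl
  | succ k ih =>
    rw [Function.iterate_succ_apply', Function.iterate_succ_apply',
      pd_comm i j (pd_iter_smooth j k hf), ih]

noncomputable def foldD {n : ℕ} (l : List (Fin n)) (α : Fin n → ℕ) (f : (Fin n → ℝ) → ℝ) :
    (Fin n → ℝ) → ℝ := l.foldr (fun i g => (pderivOne i)^[α i] g) f

theorem foldD_smooth {n : ℕ} (l : List (Fin n)) (α : Fin n → ℕ) {f : (Fin n → ℝ) → ℝ}
    (hf : ContDiff ℝ (⊤ : ℕ∞) f) : ContDiff ℝ (⊤ : ℕ∞) (foldD l α f) := by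
  induction l with
  | nil => exact hf
  | cons a l ih => exact pd_iter_smooth a _ ih

theorem foldD_comm {n : ℕ} (l : List (Fin n)) (α : Fin n → ℕ) (i : Fin n)
    {f : (Fin n → ℝ) → ℝ} (hf : ContDiff ℝ (⊤ : ℕ∞) f) :
    pderivOne i (foldD l α f) = foldD l α (pderivOne i f) := by
  induction l with
  | nil => rfl
  | cons a l ih =>
    change pderivOne i ((pderivOne a)^[α a] (foldD l α f)) =
      (pderivOne a)^[α a] (foldD l α (pderivOne i f))
    rw [pd_iter_comm i a _ (foldD_smooth l α hf), ih]

theorem foldD_congr {n : ℕ} (l : List (Fin n)) (α β : Fin n → ℕ) (h : ∀ i ∈ l, α i = β i)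
    (f : (Fin n → ℝ) → ℝ) : foldD l α f = foldD l β f := by
  induction l with
  | nil => rfl
  | cons a l ih =>
    change (pderivOne a)^[α a] (foldD l α f) = (pderivOne a)^[β a] (foldD l β f)
    rw [ih (fun i hi => h i (List.mem_cons_of_mem _ hi)), h a List.mem_cons_self]

theorem foldD_succ {n : ℕ} (l : List (Fin n)) (hl : l.Nodup) (α : Fin n → ℕ) (i : Fin n)
    (hi : i ∈ l) {f : (Fin n → ℝ) → ℝ} (hf : ContDiff ℝ (⊤ : ℕ∞) f) :
    foldD l (α + Pi.single i 1) f = foldD l α (pderivOne i f) := by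
  induction l with
  | nil => simp at hi
  | cons a l ih =>
    rw [List.nodup_cons] at hl
    change (pderivOne a)^[(α + Pi.single i 1 : Fin n → ℕ) a] (foldD l (α + Pi.single i 1) f) =
      (pderivOne a)^[α a] (foldD l α (pderivOne i f))
    by_cases h : i = a
    · subst h
      rw [foldD_congr l (α + Pi.single i 1) α (fun j hj => by
        have : j ≠ i := fun e => hl.1 (e ▸ hj)
        simp [this]), ← foldD_comm l α i hf]
      simp [Function.iterate_succ_apply]
    · have hi' : i ∈ l := by
        rcases List.mem_cons.1 hi with h' | h'
        · exact absurd h' h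
        · exact h'
      rw [ih hl.2 hi']
      have : a ≠ i := fun e => h e.symm
      simp [this]

theorem mderiv_succ {n : ℕ} (α : Fin n → ℕ) (i : Fin n) {f : (Fin n → ℝ) → ℝ}
    (hf : ContDiff ℝ (⊤ : ℕ∞) f) :
    mderiv (α + Pi.single i 1) f = mderiv α (pderivOne i f) :=
  foldD_succ _ (List.nodup_finRange n) α i (List.mem_finRange i) hf

theorem mderiv_zero' {n : ℕ} (f : (Fin n → ℝ) → ℝ) : mderiv 0 f = f := by
  unfold mderiv
  induction List.finRange n with
  | nil => rfl
  | cons a l ih => simp [ih]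

theorem pd_add {n : ℕ} (i : Fin n) {f g : (Fin n → ℝ) → ℝ}
    (hf : ContDiff ℝ (⊤ : ℕ∞) f) (hg : ContDiff ℝ (⊤ : ℕ∞) g) :
    pderivOne i (fun x => f x + g x) = fun x => pderivOne i f x + pderivOne i g x := by
  funext x
  unfold pderivOne
  rw [fderiv_fun_add (hf.differentiable (by simp) x) (hg.differentiable (by simp) x)]
  simp

theorem pd_mul {n : ℕ} (i : Fin n) {f g : (Fin n → ℝ) → ℝ}
    (hf : ContDiff ℝ (⊤ : ℕ∞) f) (hg : ContDiff ℝ (⊤ : ℕ∞) g) :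
    pderivOne i (fun x => f x * g x) =
      fun x => f x * pderivOne i g x + g x * pderivOne i f x := by
  funext x
  unfold pderivOne
  rw [fderiv_fun_mul (hf.differentiable (by simp) x) (hg.differentiable (by simp) x)]
  simp

noncomputable def taylorPS {n : ℕ} (f : (Fin n → ℝ) → ℝ) : MvPowerSeries (Fin n) ℝ :=
  fun α => mderiv (α : Fin n → ℕ) f 0 / ∏ i, ((α i).factorial : ℝ)

theorem coeff_taylorPS {n : ℕ} (f : (Fin n → ℝ) → ℝ) (α : Fin n →₀ ℕ) :
    MvPowerSeries.coeff α (taylorPS f) =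
      mderiv (α : Fin n → ℕ) f 0 / ∏ i, ((α i).factorial : ℝ) := rfl

theorem fact_ne {n : ℕ} (α : Fin n →₀ ℕ) : (∏ i, ((α i).factorial : ℝ)) ≠ 0 :=
  Finset.prod_ne_zero_iff.2 (fun i _ => by exact_mod_cast (Nat.factorial_ne_zero _))

theorem fact_succ {n : ℕ} (α : Fin n →₀ ℕ) (i : Fin n) :
    (∏ j, (((α + Finsupp.single i 1 : Fin n →₀ ℕ) j).factorial : ℝ)) =
      (α i + 1) * ∏ j, ((α j).factorial : ℝ) := by
  rw [Fintype.prod_eq_mul_prod_compl i, Fintype.prod_eq_mul_prod_compl i, ← mul_assoc]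
  congr 1
  · simp [Nat.factorial_succ]
  · apply Finset.prod_congr rfl
    intro j hj
    have : j ≠ i := by simpa using hj
    simp [Finsupp.single_apply, this.symm]

theorem pderiv_taylorPS {n : ℕ} (i : Fin n) {f : (Fin n → ℝ) → ℝ}
    (hf : ContDiff ℝ (⊤ : ℕ∞) f) :
    MvPowerSeries.pderiv ℝ i (taylorPS f) = taylorPS (pderivOne i f) := by
  ext α
  rw [MvPowerSeries.coeff_pderiv, coeff_taylorPS, coeff_taylorPS, fact_succ, Finsupp.coe_add,
    Finsupp.single_eq_pi_single, mderiv_succ _ i hf]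
  have h1 := fact_ne α
  have h2 : (α i : ℝ) + 1 ≠ 0 := by positivity
  field_simp

theorem coeff_zero_taylorPS {n : ℕ} (f : (Fin n → ℝ) → ℝ) :
    MvPowerSeries.coeff 0 (taylorPS f) = f 0 := by
  rw [coeff_taylorPS]
  simp [mderiv_zero']

theorem coeff_succ_taylorPS {n : ℕ} (α : Fin n →₀ ℕ) (i : Fin n) {p q : MvPowerSeries (Fin n) ℝ}
    (h : MvPowerSeries.coeff α (MvPowerSeries.pderiv ℝ i p) =
      MvPowerSeries.coeff α (MvPowerSeries.pderiv ℝ i q)) :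
    MvPowerSeries.coeff (α + Finsupp.single i 1) p =
      MvPowerSeries.coeff (α + Finsupp.single i 1) q := by
  rw [MvPowerSeries.coeff_pderiv, MvPowerSeries.coeff_pderiv] at h
  have h2 : (α i : ℝ) + 1 ≠ 0 := by positivity
  exact mul_right_cancel₀ h2 h

theorem exists_succ {n : ℕ} (α : Fin n →₀ ℕ) (k : ℕ) (h : α.degree = k + 1) :
    ∃ (β : Fin n →₀ ℕ) (i : Fin n), α = β + Finsupp.single i 1 ∧ β.degree = k := by
  have h0 : α ≠ 0 := by rintro rfl; simp at h
  obtain ⟨i, hi⟩ := Finsupp.ne_iff.1 h0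
  have hle : Finsupp.single i 1 ≤ α := by
    rw [Finsupp.single_le_iff]
    exact Nat.one_le_iff_ne_zero.2 hi
  refine ⟨α - Finsupp.single i 1, i, (tsub_add_cancel_of_le hle).symm, ?_⟩
  have := congrArg Finsupp.degree (tsub_add_cancel_of_le hle)
  rw [map_add, Finsupp.degree_single] at this
  omega

theorem taylorPS_add {n : ℕ} (k : ℕ) : ∀ (α : Fin n →₀ ℕ), α.degree = k →
    ∀ (f g : (Fin n → ℝ) → ℝ), ContDiff ℝ (⊤ : ℕ∞) f → ContDiff ℝ (⊤ : ℕ∞) g →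
    MvPowerSeries.coeff α (taylorPS (fun x => f x + g x)) =
      MvPowerSeries.coeff α (taylorPS f + taylorPS g) := by
  induction k with
  | zero =>
    intro α h f g _ _
    rw [Finsupp.degree_eq_zero_iff] at h
    subst h
    rw [map_add, coeff_zero_taylorPS, coeff_zero_taylorPS, coeff_zero_taylorPS]
  | succ k ih =>
    intro α h f g hf hg
    obtain ⟨β, i, rfl, hβ⟩ := exists_succ α k h
    apply coeff_succ_taylorPS
    rw [pderiv_taylorPS i (hf.add hg), map_add, pderiv_taylorPS i hf, pderiv_taylorPS i hg,
      pd_add i hf hg, ih β hβ _ _ (pd_smooth i hf) (pd_smooth i hg)]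

theorem taylorPS_mul {n : ℕ} (k : ℕ) : ∀ (α : Fin n →₀ ℕ), α.degree = k →
    ∀ (f g : (Fin n → ℝ) → ℝ), ContDiff ℝ (⊤ : ℕ∞) f → ContDiff ℝ (⊤ : ℕ∞) g →
    MvPowerSeries.coeff α (taylorPS (fun x => f x * g x)) =
      MvPowerSeries.coeff α (taylorPS f * taylorPS g) := by
  induction k with
  | zero =>
    intro α h f g _ _
    rw [Finsupp.degree_eq_zero_iff] at h
    subst h
    rw [coeff_zero_taylorPS, MvPowerSeries.coeff_zero_eq_constantCoeff_apply, map_mul,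
      ← MvPowerSeries.coeff_zero_eq_constantCoeff_apply,
      ← MvPowerSeries.coeff_zero_eq_constantCoeff_apply,
      coeff_zero_taylorPS, coeff_zero_taylorPS]
  | succ k ih =>
    intro α h f g hf hg
    obtain ⟨β, i, rfl, hβ⟩ := exists_succ α k h
    apply coeff_succ_taylorPS
    rw [pderiv_taylorPS i (hf.mul hg), Derivation.leibniz, pderiv_taylorPS i hf,
      pderiv_taylorPS i hg, pd_mul i hf hg,
      taylorPS_add k β hβ _ _ (hf.mul (pd_smooth i hg)) (hg.mul (pd_smooth i hf)),
      map_add, map_add, ih β hβ _ _ hf (pd_smooth i hg), ih β hβ _ _ hg (pd_smooth i hf),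
      smul_eq_mul, smul_eq_mul]

/-- If `f, h : ℝⁿ → ℝ` are smooth and satisfy the symmetry relation
`∂^α(h·f)(0)·∂^β f(0) = ∂^β(h·f)(0)·∂^α f(0)` for all multi-indices `α, β ∈ ℕⁿ`, then
either `∂^α f(0) = 0` for every multi-index `α`, or `∂^β h(0) = 0` for every nonzero
multi-index `β`. -/
theorem stmt_3 {n : ℕ} (f h : (Fin n → ℝ) → ℝ)
    (hf : ContDiff ℝ (⊤ : ℕ∞) f) (hh : ContDiff ℝ (⊤ : ℕ∞) h)
    (hsym : ∀ α β : Fin n → ℕ,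
      mderiv α (fun x => h x * f x) 0 * mderiv β f 0 =
        mderiv β (fun x => h x * f x) 0 * mderiv α f 0) :
    (∀ α : Fin n → ℕ, mderiv α f 0 = 0) ∨
      (∀ β : Fin n → ℕ, β ≠ 0 → mderiv β h 0 = 0) := by

  by_cases hz : ∀ α : Fin n → ℕ, mderiv α f 0 = 0
  · exact Or.inl hz
  right
  push Not at hz
  obtain ⟨γ, hγ⟩ := hz
  have hmul : taylorPS (fun x => h x * f x) = taylorPS h * taylorPS f := by
    ext α
    exact taylorPS_mul _ α rfl h f hh hf
  set c : ℝ := mderiv γ (fun x => h x * f x) 0 / mderiv γ f 0 with hc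
  have hprop : taylorPS (fun x => h x * f x) = MvPowerSeries.C c * taylorPS f := by
    ext α
    rw [MvPowerSeries.coeff_C_mul, coeff_taylorPS, coeff_taylorPS, ← mul_div_assoc]
    congr 1
    rw [hc, div_mul_eq_mul_div, eq_div_iff hγ]
    exact hsym _ _
  have hne : taylorPS f ≠ 0 := by
    intro h0
    have h1 := congrArg (MvPowerSeries.coeff (Finsupp.equivFunOnFinite.symm γ)) h0
    rw [coeff_taylorPS, map_zero, div_eq_zero_iff] at h1
    rcases h1 with h1 | h1
    · exact hγ (by simpa using h1)
    · exact fact_ne _ h1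
  have hC : taylorPS h = MvPowerSeries.C c :=
    mul_right_cancel₀ hne (hmul.symm.trans hprop)
  intro β hβ
  have h1 := congrArg (MvPowerSeries.coeff (Finsupp.equivFunOnFinite.symm β)) hC
  classical
  rw [coeff_taylorPS, MvPowerSeries.coeff_C, if_neg, div_eq_zero_iff] at h1
  · rcases h1 with h1 | h1
    · simpa using h1
    · exact absurd h1 (fact_ne _)
  · intro h2
    apply hβ
    simpa using congrArg (fun z : Fin n →₀ ℕ => (z : Fin n → ℕ)) h2
end

section
/- Let f : ℝⁿ → ℝ be infinitely differentiable and let U ⊆ ℝⁿ be a nonempty open set. Suppose that for every v ∈ U and every j ∈ ℕ, the j-th derivative of the one-variable function t ↦ f(t·v) at t = 0 vanishes. Then ∂^α f(0) = 0 for every multi-index α ∈ ℕⁿ. -/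
lemma contDiff_dir {n : ℕ} (f : (Fin n → ℝ) → ℝ) (hf : ContDiff ℝ (⊤ : ℕ∞) f) (e : Fin n → ℝ) :
    ContDiff ℝ (⊤ : ℕ∞) (fun x => fderiv ℝ f x e) :=
  (hf.fderiv_right (m := (⊤ : ℕ∞)) (by simp)).clm_apply contDiff_const

lemma dir_comm {n : ℕ} (f : (Fin n → ℝ) → ℝ) (hf : ContDiff ℝ (⊤ : ℕ∞) f) (e v : Fin n → ℝ) :
    (fun x => fderiv ℝ (fun y => fderiv ℝ f y e) x v)
      = (fun x => fderiv ℝ (fun y => fderiv ℝ f y v) x e) := by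
  funext x
  have hd : DifferentiableAt ℝ (fderiv ℝ f) x :=
    ((hf.fderiv_right (m := (⊤ : ℕ∞)) (by simp)).differentiable (by simp)) x
  have h : ∀ a : Fin n → ℝ, fderiv ℝ (fun y => fderiv ℝ f y a) x
      = (fderiv ℝ (fderiv ℝ f) x).flip a := by
    intro a
    rw [fderiv_clm_apply hd (differentiableAt_const a)]
    ext1; simp
  rw [h, h]
  have hs : IsSymmSndFDerivAt ℝ f x :=
    hf.contDiffAt.isSymmSndFDerivAt (by
      rw [minSmoothness_of_isRCLikeNormedField]; exact WithTop.coe_le_coe.2 le_top)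
  exact hs v e

lemma iter_succ {n : ℕ} (f : (Fin n → ℝ) → ℝ) (hf : ContDiff ℝ (⊤ : ℕ∞) f) (x : Fin n → ℝ)
    (j : ℕ) (m : Fin (j + 1) → (Fin n → ℝ)) :
    iteratedFDeriv ℝ (j + 1) f x m
      = iteratedFDeriv ℝ j (fun y => fderiv ℝ f y (m (Fin.last j))) x (Fin.init m) := by
  rw [iteratedFDeriv_succ_apply_right,
    iteratedFDeriv_clm_apply_const_apply (n := (⊤ : ℕ∞)) (hf.fderiv_right (by simp))
      (by exact_mod_cast le_top)]

lemma iter_update {n : ℕ} (x e v : Fin n → ℝ) (j : ℕ) :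
    ∀ (f : (Fin n → ℝ) → ℝ) (_ : ContDiff ℝ (⊤ : ℕ∞) f) (k : Fin (j + 1)),
    iteratedFDeriv ℝ (j + 1) f x (Function.update (fun _ => v) k e)
      = iteratedFDeriv ℝ j (fun y => fderiv ℝ f y e) x (fun _ => v) := by
  induction j with
  | zero =>
    intro f hf k
    obtain rfl : k = Fin.last 0 := Fin.ext (by have := k.2; simp only [Fin.val_last]; omega)
    rw [iter_succ f hf, Function.update_self]
    congr 1
    exact Subsingleton.elim _ _
  | succ j ih =>
    intro f hf k
    rw [iter_succ f hf]
    induction k using Fin.lastCases with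
    | last =>
      rw [Function.update_self, Fin.init_update_last]
      rfl
    | cast k =>
      rw [Function.update_of_ne (Fin.castSucc_lt_last k).ne', Fin.init_update_castSucc]
      have := ih _ (contDiff_dir f hf v) k
      rw [dir_comm f hf v e] at this
      rw [iter_succ _ (contDiff_dir f hf e)]
      exact this

lemma line_eq {n : ℕ} (f : (Fin n → ℝ) → ℝ) (hf : ContDiff ℝ (⊤ : ℕ∞) f) (v : Fin n → ℝ) (j : ℕ) :
    iteratedDeriv j (fun t : ℝ => f (t • v)) 0 = iteratedFDeriv ℝ j f 0 (fun _ => v) := by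
  have h := ContinuousLinearMap.iteratedFDeriv_comp_right (n := (⊤ : ℕ∞))
    (ContinuousLinearMap.toSpanSingleton ℝ v) hf 0 (i := j) (by exact_mod_cast le_top)
  have h2 : (f ∘ (ContinuousLinearMap.toSpanSingleton ℝ v)) = fun t : ℝ => f (t • v) := by
    funext t; simp
  rw [iteratedDeriv_eq_iteratedFDeriv, ← h2, h]
  simp

lemma van_step {n : ℕ} (f : (Fin n → ℝ) → ℝ) (hf : ContDiff ℝ (⊤ : ℕ∞) f)
    (U : Set (Fin n → ℝ)) (hU : IsOpen U)
    (hvan : ∀ v ∈ U, ∀ j : ℕ, iteratedFDeriv ℝ j f 0 (fun _ => v) = 0) (e : Fin n → ℝ) :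
    ∀ v ∈ U, ∀ j : ℕ, iteratedFDeriv ℝ j (fun y => fderiv ℝ f y e) 0 (fun _ => v) = 0 := by
  intro v hv j
  have h1 := HasFDerivAt.multilinear_comp (iteratedFDeriv ℝ (j + 1) f 0)
    (g := fun _ => id) (x := v) (fun _ => hasFDerivAt_id v)
  have h0 : HasFDerivAt (fun w : Fin n → ℝ => iteratedFDeriv ℝ (j + 1) f 0 (fun _ => id w))
      (0 : (Fin n → ℝ) →L[ℝ] ℝ) v := by
    refine (hasFDerivAt_const (0 : ℝ) v).congr_of_eventuallyEq ?_
    filter_upwards [hU.mem_nhds hv] with w hw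
    exact hvan w hw (j + 1)
  have h2 := congrArg (fun L => L e) (h1.unique h0)
  simp only [id] at h2
  rw [sum_apply] at h2
  have h3 : ∀ k : Fin (j + 1), ((ContinuousMultilinearMap.toContinuousLinearMap
      (iteratedFDeriv ℝ (j + 1) f 0) (fun _ => v) k) ∘L
      (ContinuousLinearMap.id ℝ (Fin n → ℝ))) e
      = iteratedFDeriv ℝ j (fun y => fderiv ℝ f y e) 0 (fun _ => v) := by
    intro k
    rw [← iter_update 0 e v j f hf k]
    rfl
  rw [Finset.sum_congr rfl (fun k _ => h3 k)] at h2
  simp only [Finset.sum_const, Finset.card_univ, Fintype.card_fin, nsmul_eq_mul] at h2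
  rcases mul_eq_zero.1 h2 with h | h
  · exact absurd h (by positivity)
  · exact h

/-- Let `f : ℝⁿ → ℝ` be smooth and let `U ⊆ ℝⁿ` be a nonempty open set.
If for every `v ∈ U` and every `j ∈ ℕ` the `j`-th derivative of `t ↦ f(t·v)` at `t = 0`
vanishes, then `∂^α f(0) = 0` for every multi-index `α ∈ ℕⁿ`. -/
theorem stmt_5 {n : ℕ} (f : (Fin n → ℝ) → ℝ) (hf : ContDiff ℝ (⊤ : ℕ∞) f)
    (U : Set (Fin n → ℝ)) (hU : IsOpen U) (hUne : U.Nonempty)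
    (hvan : ∀ v ∈ U, ∀ j : ℕ, iteratedDeriv j (fun t : ℝ => f (t • v)) 0 = 0) :
    ∀ α : Fin n → ℕ, mderiv α f 0 = 0 := by
  intro α
  have key : ∀ l : List (Fin n),
      ContDiff ℝ (⊤ : ℕ∞) (l.foldr (fun i g => (pderivOne i)^[α i] g) f) ∧
      ∀ v ∈ U, ∀ j : ℕ, iteratedFDeriv ℝ j
        (l.foldr (fun i g => (pderivOne i)^[α i] g) f) 0 (fun _ => v) = 0 := by
    intro l
    induction l with
    | nil => exact ⟨hf, fun v hv j => by rw [List.foldr_nil, ← line_eq f hf]; exact hvan v hv j⟩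
    | cons i l ih =>
      rw [List.foldr_cons]
      generalize α i = a
      induction a with
      | zero => exact ih
      | succ a iha =>
        rw [Function.iterate_succ_apply']
        exact ⟨contDiff_dir _ iha.1 _, van_step _ iha.1 U hU iha.2 _⟩
  obtain ⟨v, hv⟩ := hUne
  have := (key (List.finRange n)).2 v hv 0
  rw [iteratedFDeriv_zero_apply] at this
  exact this
end
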